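/- Let p₀,p₁,p₂,p₃ ∈ ℝ³ span a small simplex S with edge lengths y₁ = |p₀−p₁|, y₂ = |p₀−p₂|, y₃ = |p₀−p₃|, y₄ = |p₂−p₃|, y₅ = |p₁−p₃|, y₆ = |p₁−p₂| satisfying y₁, y₄ ∈ [2√2 − 0.01, 2√2] and y₂, y₃, y₅, y₆ ∈ [2, 2.01] (i.e., all edge lengths lie within 0.01 of those of S₁ = S(2√2,2,2,2√2,2,2)). Then Γ(S) ≤ 0, with equality if and only if y₁ = y₄ = 2√2 and y₂ = y₃ = y₅ = y₆ = 2. -/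

import Mathlib

open MeasureTheory Real

noncomputable section

abbrev E3 : Type := EuclideanSpace ℝ (Fin 3)

/-- The density of the regular octahedron. -/
def δoct : ℝ := (-3 * π + 12 * arccos (1 / Real.sqrt 3)) / Real.sqrt 8

/-- The compression `Γ(S)` of the simplex `S = conv {p₀, p₁, p₂, p₃}`:
`Γ(S) = -δ_oct · vol S + vol (S ∩ (B(p₀,1) ∪ B(p₁,1) ∪ B(p₂,1) ∪ B(p₃,1)))`. -/
def Gamma (p₀ p₁ p₂ p₃ : E3) : ℝ :=
  -δoct * (volume (convexHull ℝ ({p₀, p₁, p₂, p₃} : Set E3))).toReal +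
    (volume (convexHull ℝ ({p₀, p₁, p₂, p₃} : Set E3) ∩
      (Metric.closedBall p₀ 1 ∪ Metric.closedBall p₁ 1 ∪ Metric.closedBall p₂ 1 ∪
        Metric.closedBall p₃ 1))).toReal

/-- The circumradius `η(a,b,c)` of a triangle with side lengths `a`, `b`, `c`. -/
def eta (a b c : ℝ) : ℝ :=
  a * b * c / Real.sqrt ((a + b + c) * (b + c - a) * (a + c - b) * (a + b - c))

/-- A simplex is small if all six edge lengths are at least `2` and each of the
four triangular faces has circumradius at most `√2`. -/
def IsSmall (p₀ p₁ p₂ p₃ : E3) : Prop :=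
  (2 ≤ dist p₀ p₁ ∧ 2 ≤ dist p₀ p₂ ∧ 2 ≤ dist p₀ p₃ ∧
    2 ≤ dist p₁ p₂ ∧ 2 ≤ dist p₁ p₃ ∧ 2 ≤ dist p₂ p₃) ∧
  eta (dist p₀ p₁) (dist p₀ p₂) (dist p₁ p₂) ≤ Real.sqrt 2 ∧
  eta (dist p₀ p₁) (dist p₀ p₃) (dist p₁ p₃) ≤ Real.sqrt 2 ∧
  eta (dist p₀ p₂) (dist p₀ p₃) (dist p₂ p₃) ≤ Real.sqrt 2 ∧
  eta (dist p₁ p₂) (dist p₁ p₃) (dist p₂ p₃) ≤ Real.sqrt 2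

/-- The map `t ↦ t₀ v₁ + t₁ v₂ + t₂ v₃`. -/
def Amap (v₁ v₂ v₃ : E3) : E3 →ₗ[ℝ] E3 where
  toFun t := t 0 • v₁ + t 1 • v₂ + t 2 • v₃
  map_add' s t := by simp only [PiLp.add_apply]; module
  map_smul' c t := by simp only [PiLp.smul_apply, smul_eq_mul, RingHom.id_apply]; module

/-- The corner simplex. -/
def Tset : Set E3 := {t | 0 ≤ t 0 ∧ 0 ≤ t 1 ∧ 0 ≤ t 2 ∧ t 0 + t 1 + t 2 ≤ 1}

lemma hull_eq (p₀ p₁ p₂ p₃ : E3) :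
    convexHull ℝ ({p₀, p₁, p₂, p₃} : Set E3) =
      (fun x => p₀ + x) '' (Amap (p₁ - p₀) (p₂ - p₀) (p₃ - p₀) '' Tset) := by
  apply Set.Subset.antisymm
  · apply convexHull_min
    · rintro x (rfl | rfl | rfl | rfl)
      · exact ⟨0, ⟨0, by simp [Tset], by simp⟩, by simp⟩
      · exact ⟨_, ⟨!₂[1, 0, 0], by simp [Tset], rfl⟩, by simp [Amap]⟩
      · exact ⟨_, ⟨!₂[0, 1, 0], by simp [Tset], rfl⟩, by simp [Amap]⟩
      · exact ⟨_, ⟨!₂[0, 0, 1], by simp [Tset], rfl⟩, by simp [Amap]⟩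
    · have hT : Convex ℝ Tset := by
        rintro x ⟨h1, h2, h3, h4⟩ y ⟨k1, k2, k3, k4⟩ a b ha hb hab
        refine ⟨?_, ?_, ?_, ?_⟩ <;> simp only [PiLp.add_apply, PiLp.smul_apply, smul_eq_mul]
        · positivity
        · positivity
        · positivity
        · nlinarith [mul_le_mul_of_nonneg_left h4 ha, mul_le_mul_of_nonneg_left k4 hb]
      exact (hT.linear_image _).translate p₀
  · rintro _ ⟨_, ⟨t, ⟨h1, h2, h3, h4⟩, rfl⟩, rfl⟩
    have := (convex_convexHull ℝ ({p₀, p₁, p₂, p₃} : Set E3)).sum_mem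
      (t := Finset.univ) (w := ![1 - t 0 - t 1 - t 2, t 0, t 1, t 2]) (z := ![p₀, p₁, p₂, p₃])
      (by intro i _; fin_cases i <;> simp <;> linarith)
      (by simp [Fin.sum_univ_four]; ring)
      (by intro i _; apply subset_convexHull; fin_cases i <;> simp)
    convert this using 1
    simp [Fin.sum_univ_four, Amap]
    module

lemma vol_image (p : E3) (f : E3 →ₗ[ℝ] E3) (T : Set E3) :
    volume ((fun x => p + x) '' (f '' T)) = ENNReal.ofReal |LinearMap.det f| * volume T := by
  rw [Set.image_add_left, measure_preimage_add, Measure.addHaar_image_linearMap]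

lemma vol_hull (p₀ p₁ p₂ p₃ : E3) :
    volume (convexHull ℝ ({p₀, p₁, p₂, p₃} : Set E3)) =
      ENNReal.ofReal |LinearMap.det (Amap (p₁ - p₀) (p₂ - p₀) (p₃ - p₀))| * volume Tset := by
  rw [hull_eq, vol_image]

lemma vol_T_pos : volume Tset ≠ 0 := by
  have ho : IsOpen {t : E3 | 0 < t 0 ∧ 0 < t 1 ∧ 0 < t 2 ∧ t 0 + t 1 + t 2 < 1} := by
    apply IsOpen.and; · exact isOpen_lt (by fun_prop) (by fun_prop)
    apply IsOpen.and; · exact isOpen_lt (by fun_prop) (by fun_prop)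
    apply IsOpen.and; · exact isOpen_lt (by fun_prop) (by fun_prop)
    exact isOpen_lt (by fun_prop) (by fun_prop)
  have hn : {t : E3 | 0 < t 0 ∧ 0 < t 1 ∧ 0 < t 2 ∧ t 0 + t 1 + t 2 < 1}.Nonempty :=
    ⟨!₂[1/4, 1/4, 1/4], by simp; norm_num⟩
  have h := ho.measure_pos volume hn
  refine (h.trans_le (measure_mono ?_)).ne'
  rintro t ⟨a, b, c, d⟩
  exact ⟨a.le, b.le, c.le, d.le⟩

lemma vol_hull_ne_top (p₀ p₁ p₂ p₃ : E3) :
    volume (convexHull ℝ ({p₀, p₁, p₂, p₃} : Set E3)) ≠ ⊤ :=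
  ((Set.toFinite ({p₀, p₁, p₂, p₃} : Set E3)).isCompact_convexHull ℝ).measure_lt_top.ne

/-- Diagonal map. -/
def Dmap (d : Fin 3 → ℝ) : E3 →ₗ[ℝ] E3 := Matrix.toEuclideanLin (Matrix.diagonal d)

lemma det_Dmap (d : Fin 3 → ℝ) : LinearMap.det (Dmap d) = d 0 * d 1 * d 2 := by
  rw [Dmap, Matrix.toEuclideanLin_eq_toLin, LinearMap.det_toLin, Matrix.det_diagonal,
    Fin.prod_univ_three]

lemma Dmap_apply (d : Fin 3 → ℝ) (t : E3) (i : Fin 3) : Dmap d t i = d i * t i := by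
  simp [Dmap, Matrix.toEuclideanLin_apply, Matrix.mulVec_diagonal]

lemma vol_inter (p₀ p₁ p₂ p₃ u : E3) (hu : ‖u‖ = 1)
    (h1 : 0 < inner ℝ (p₁ - p₀) u) (h2 : 0 < inner ℝ (p₂ - p₀) u)
    (h3 : 0 < inner ℝ (p₃ - p₀) u) :
    (volume (convexHull ℝ ({p₀, p₁, p₂, p₃} : Set E3) ∩ Metric.closedBall p₀ 1)).toReal ≤
      (inner ℝ (p₁ - p₀) u * inner ℝ (p₂ - p₀) u * inner ℝ (p₃ - p₀) u)⁻¹ *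
      (volume (convexHull ℝ ({p₀, p₁, p₂, p₃} : Set E3))).toReal := by
  set c : Fin 3 → ℝ := ![inner ℝ (p₁ - p₀) u, inner ℝ (p₂ - p₀) u, inner ℝ (p₃ - p₀) u] with hc
  set A := Amap (p₁ - p₀) (p₂ - p₀) (p₃ - p₀) with hA
  set D := Dmap (fun i => (c i)⁻¹) with hD
  have hpos : ∀ i, 0 < c i := by intro i; fin_cases i <;> simpa [hc]
  have hsub : convexHull ℝ ({p₀, p₁, p₂, p₃} : Set E3) ∩ Metric.closedBall p₀ 1 ⊆
      (fun x => p₀ + x) '' ((A ∘ₗ D) '' Tset) := by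
    rintro _ ⟨hx, hb⟩
    rw [hull_eq] at hx
    obtain ⟨_, ⟨t, ⟨t1, t2, t3, t4⟩, rfl⟩, rfl⟩ := hx
    have hn : ‖A t‖ ≤ 1 := by simpa [hA] using hb
    have hin : inner ℝ (A t) u ≤ 1 := by
      have := real_inner_le_norm (A t) u
      rw [hu] at this; linarith
    have hin' : inner ℝ (A t) u = t 0 * c 0 + t 1 * c 1 + t 2 * c 2 := by
      simp [hA, Amap, inner_add_left, real_inner_smul_left, hc]
    refine ⟨_, ⟨!₂[c 0 * t 0, c 1 * t 1, c 2 * t 2], ?_, rfl⟩, ?_⟩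
    · refine ⟨?_, ?_, ?_, ?_⟩
      · simpa using mul_nonneg (hpos 0).le t1
      · simpa using mul_nonneg (hpos 1).le t2
      · simpa using mul_nonneg (hpos 2).le t3
      · simp; linarith
    · have : D !₂[c 0 * t 0, c 1 * t 1, c 2 * t 2] = t := by
        ext i
        rw [hD, Dmap_apply]
        have := (hpos i).ne'
        fin_cases i <;> simp at this ⊢ <;> field_simp
      simp only [LinearMap.comp_apply, this]
      rfl
  have hd : LinearMap.det (A ∘ₗ D) =
      LinearMap.det A * (c 0 * c 1 * c 2)⁻¹ := by
    rw [LinearMap.det_comp, hD, det_Dmap, mul_inv, mul_inv]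
  have hv : volume ((fun x => p₀ + x) '' ((A ∘ₗ D) '' Tset)) =
      ENNReal.ofReal (c 0 * c 1 * c 2)⁻¹ *
        volume (convexHull ℝ ({p₀, p₁, p₂, p₃} : Set E3)) := by
    have h0 : 0 ≤ (c 0 * c 1 * c 2)⁻¹ :=
      (inv_pos.2 (mul_pos (mul_pos (hpos 0) (hpos 1)) (hpos 2))).le
    rw [vol_image, vol_hull, hd, abs_mul, abs_of_nonneg h0, mul_comm |_|,
      ENNReal.ofReal_mul h0, mul_assoc]
  have h0 : 0 ≤ (c 0 * c 1 * c 2)⁻¹ :=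
      (inv_pos.2 (mul_pos (mul_pos (hpos 0) (hpos 1)) (hpos 2))).le
  have := ENNReal.toReal_mono (ENNReal.mul_ne_top ENNReal.ofReal_ne_top
    (vol_hull_ne_top p₀ p₁ p₂ p₃)) ((measure_mono hsub).trans_eq hv)
  rwa [ENNReal.toReal_mul, ENNReal.toReal_ofReal h0] at this

lemma corner (p q r s : E3) (hy : 0 < dist p q)
    (ha : 0 < dist p q ^ 2 + dist p r ^ 2 - dist q r ^ 2)
    (hb : 0 < dist p q ^ 2 + dist p s ^ 2 - dist q s ^ 2) :
    (volume (convexHull ℝ ({p, q, r, s} : Set E3) ∩ Metric.closedBall p 1)).toReal ≤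
      (4 * dist p q / ((dist p q ^ 2 + dist p r ^ 2 - dist q r ^ 2) *
        (dist p q ^ 2 + dist p s ^ 2 - dist q s ^ 2))) *
      (volume (convexHull ℝ ({p, q, r, s} : Set E3))).toReal := by
  have key : ∀ x : E3, inner ℝ (x - p) ((dist p q)⁻¹ • (q - p)) =
      (dist p q ^ 2 + dist p x ^ 2 - dist q x ^ 2) / (2 * dist p q) := by
    intro x
    have e : dist q x ^ 2 = dist p x ^ 2 - 2 * inner ℝ (x - p) (q - p) + dist p q ^ 2 := by
      rw [dist_comm q x, dist_comm p x, dist_comm p q, dist_eq_norm, dist_eq_norm, dist_eq_norm,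
        ← norm_sub_sq_real]
      congr 2; abel
    rw [real_inner_smul_right, e]; field_simp; ring
  have hq : inner ℝ (q - p) ((dist p q)⁻¹ • (q - p)) = dist p q := by
    rw [key]; simp; field_simp; norm_num
  have hu : ‖(dist p q)⁻¹ • (q - p)‖ = 1 := by
    rw [norm_smul, ← dist_eq_norm, dist_comm q p, norm_inv, Real.norm_of_nonneg hy.le]
    field_simp
  have := vol_inter p q r s _ hu (by rw [hq]; exact hy) (by rw [key]; positivity)
    (by rw [key]; positivity)
  rw [hq, key, key] at this
  convert this using 2
  field_simp; norm_num

lemma delta_lb : 0.7169 < δoct := by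
  have hs2 : Real.sqrt 2 ^ 2 = 2 := Real.sq_sqrt (by norm_num)
  have hs3 : Real.sqrt 3 ^ 2 = 3 := Real.sq_sqrt (by norm_num)
  have h2a : 1.414213 < Real.sqrt 2 := Real.lt_sqrt_of_sq_lt (by norm_num)
  have h2b : Real.sqrt 2 < 1.414214 := by rw [Real.sqrt_lt' (by norm_num)]; norm_num
  have h3a : 1.73205 < Real.sqrt 3 := Real.lt_sqrt_of_sq_lt (by norm_num)
  have h8 : Real.sqrt 8 = 2 * Real.sqrt 2 := by
    rw [show (8:ℝ) = 2 ^ 2 * 2 by norm_num, Real.sqrt_mul (by norm_num), Real.sqrt_sq (by norm_num)]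
  have hc : 1 - (0.169:ℝ) ^ 2 / 2 ≤ cos 0.169 := Real.one_sub_sq_div_two_le_cos
  have hs : sin (0.169:ℝ) < 0.169 := Real.sin_lt (by norm_num)
  have hcos : 1 / Real.sqrt 3 ≤ cos (π / 4 + 0.169) := by
    rw [cos_add, cos_pi_div_four, sin_pi_div_four, div_le_iff₀ (by linarith)]
    have : 0.81671 ≤ cos 0.169 - sin 0.169 := by norm_num at hc hs ⊢; linarith
    have h5 : 1.414213 / 2 * 0.81671 ≤
      Real.sqrt 2 / 2 * cos 0.169 - Real.sqrt 2 / 2 * sin 0.169 := by nlinarith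
    nlinarith
  have hacos : π / 4 + 0.169 ≤ arccos (1 / Real.sqrt 3) := by
    rw [← Real.arccos_cos (x := π / 4 + 0.169) (by positivity) (by linarith [Real.pi_gt_three])]
    exact Real.arccos_le_arccos hcos
  rw [δoct, lt_div_iff₀ (by positivity), h8]
  nlinarith

lemma num_bound (y a b : ℝ) (h1 : 2.8184 ≤ y) (h2 : y ≤ 2.8285) (ha : |a| ≤ 0.0401)
    (hb : |b| ≤ 0.0401) :
    4 * y / ((y ^ 2 + a) * (y ^ 2 + b)) + 4 * y / ((y ^ 2 - a) * (y ^ 2 - b)) ≤ 0.358 := by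
  rw [abs_le] at ha hb
  have hy : 7.94 ≤ y ^ 2 := by nlinarith
  have e1 : 0 < (y ^ 2 + a) * (y ^ 2 + b) := mul_pos (by linarith) (by linarith)
  have e2 : 0 < (y ^ 2 - a) * (y ^ 2 - b) := mul_pos (by linarith) (by linarith)
  rw [div_add_div _ _ e1.ne' e2.ne', div_le_iff₀ (mul_pos e1 e2)]
  have ha2 : a ^ 2 ≤ 0.00161 := by nlinarith
  have hb2 : b ^ 2 ≤ 0.00161 := by nlinarith
  have hab : a * b ≤ 0.00161 := by nlinarith [sq_nonneg (a - b)]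
  have hl : 4 * y * ((y ^ 2 - a) * (y ^ 2 - b)) + (y ^ 2 + a) * (y ^ 2 + b) * (4 * y) =
    8 * y * ((y ^ 2) ^ 2 + a * b) := by ring
  have hr : (y ^ 2 + a) * (y ^ 2 + b) * ((y ^ 2 - a) * (y ^ 2 - b)) =
    ((y ^ 2) ^ 2 - a ^ 2) * ((y ^ 2) ^ 2 - b ^ 2) := by ring
  rw [hl, hr]
  have hY : 63 ≤ (y ^ 2) ^ 2 := by nlinarith
  have g1 : 8 * y * ((y ^ 2) ^ 2 + a * b) ≤ 8 * y * ((y ^ 2) ^ 2 + 0.00161) := by gcongr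
  have g2 : ((y ^ 2) ^ 2 - 0.00161) * ((y ^ 2) ^ 2 - 0.00161) ≤
      ((y ^ 2) ^ 2 - a ^ 2) * ((y ^ 2) ^ 2 - b ^ 2) := by
    apply mul_le_mul <;> linarith
  have hY3 : 22.387 ≤ y ^ 3 := by
    calc (22.387 : ℝ) ≤ 2.8184 ^ 3 := by norm_num
      _ ≤ y ^ 3 := by gcongr
  have g3 : 8 * y * ((y ^ 2) ^ 2 + 0.00161) ≤ 0.358 * (((y ^ 2) ^ 2 - 0.00161) * ((y ^ 2) ^ 2 - 0.00161)) := by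
    have i1 : (y ^ 2) ^ 2 + 0.00161 ≤ 1.0001 * (y ^ 2) ^ 2 := by linarith
    have i2 : 0.9999 * (y ^ 2) ^ 2 ≤ (y ^ 2) ^ 2 - 0.00161 := by linarith
    have i3 : (0.9999 * (y ^ 2) ^ 2) * (0.9999 * (y ^ 2) ^ 2) ≤
      ((y ^ 2) ^ 2 - 0.00161) * ((y ^ 2) ^ 2 - 0.00161) := by
      apply mul_le_mul i2 i2 <;> nlinarith
    have i4 : 8 * y * ((y ^ 2) ^ 2 + 0.00161) ≤ 8 * y * (1.0001 * (y ^ 2) ^ 2) := by gcongr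
    have i5 : 22.387 * y ^ 5 ≤ y ^ 3 * y ^ 5 := by gcongr
    have i6 : 0 ≤ y ^ 5 := by positivity
    have i7 : 8 * y * (1.0001 * (y ^ 2) ^ 2) = 8.0008 * y ^ 5 := by ring
    have i8 : (0.9999 * (y ^ 2) ^ 2) * (0.9999 * (y ^ 2) ^ 2) = 0.99980001 * (y ^ 3 * y ^ 5) := by
      ring
    rw [i7] at i4; rw [i8] at i3
    nlinarith
  linarith

lemma gram_zero (m d f : E3) (α β γ : ℝ) (h : α • m + β • d + γ • f = 0)
    (hne : ¬ (α = 0 ∧ β = 0 ∧ γ = 0)) (M X Y D Z F : ℝ)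
    (hM : inner ℝ m m = M) (hX : inner ℝ m d = X) (hY : inner ℝ m f = Y)
    (hD : inner ℝ d d = D) (hZ : inner ℝ d f = Z) (hF : inner ℝ f f = F) :
    M * (D * F - Z ^ 2) - F * X ^ 2 - D * Y ^ 2 + 2 * X * Y * Z = 0 := by
  have e1 : α * M + β * X + γ * Y = 0 := by
    have := congrArg (fun w => inner ℝ m w) h
    simpa only [inner_add_right, real_inner_smul_right, inner_zero_right, hM, hX, hY] using this
  have e2 : α * X + β * D + γ * Z = 0 := by
    have := congrArg (fun w => inner ℝ d w) h
    simpa only [inner_add_right, real_inner_smul_right, inner_zero_right, real_inner_comm m d, hX, hD, hZ] using this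
  have e3 : α * Y + β * Z + γ * F = 0 := by
    have := congrArg (fun w => inner ℝ f w) h
    simpa only [inner_add_right, real_inner_smul_right, inner_zero_right, real_inner_comm m f, real_inner_comm d f,
      hY, hZ, hF] using this
  set G := M * (D * F - Z ^ 2) - F * X ^ 2 - D * Y ^ 2 + 2 * X * Y * Z with hG
  have a1 : α * G = 0 := by
    rw [hG]
    linear_combination (D * F - Z ^ 2) * e1 + (Y * Z - X * F) * e2 + (X * Z - D * Y) * e3
  have a2 : β * G = 0 := by
    rw [hG]
    linear_combination (Y * Z - X * F) * e1 + (M * F - Y ^ 2) * e2 + (X * Y - M * Z) * e3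
  have a3 : γ * G = 0 := by
    rw [hG]
    linear_combination (X * Z - D * Y) * e1 + (X * Y - M * Z) * e2 + (M * D - X ^ 2) * e3
  by_contra hG0
  exact hne ⟨(mul_eq_zero.1 a1).resolve_right hG0, (mul_eq_zero.1 a2).resolve_right hG0,
    (mul_eq_zero.1 a3).resolve_right hG0⟩

lemma flat_num (D F a b c e : ℝ) (hD1 : 7.9 ≤ D) (hD2 : D ≤ 8) (hF1 : 7.9 ≤ F) (hF2 : F ≤ 8)
    (ha : 4 ≤ a) (ha' : a ≤ 4.05) (hb : 4 ≤ b) (hb' : b ≤ 4.05)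
    (hc : 4 ≤ c) (hc' : c ≤ 4.05) (he : 4 ≤ e) (he' : e ≤ 4.05)
    (M X Y Z : ℝ) (hM : M = (a + b + c + e - D - F) / 4)
    (hX : X = (e + c - a - b) / 4) (hY : Y = (a - b + e - c) / 4)
    (hZ : Z = (e - c - a + b) / 2)
    (h : M * (D * F - Z ^ 2) - F * X ^ 2 - D * Y ^ 2 + 2 * X * Y * Z = 0) :
    D = 8 ∧ F = 8 ∧ a = 4 ∧ b = 4 ∧ c = 4 ∧ e = 4 := by
  obtain ⟨s, hs⟩ : ∃ s, s = a + b + c + e - 16 := ⟨_, rfl⟩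
  have hs0 : 0 ≤ s := by linarith
  have hs1 : s ≤ 0.2 := by linarith
  have hX' : |X| ≤ s / 4 := by rw [abs_le]; constructor <;> linarith
  have hY' : |Y| ≤ s / 4 := by rw [abs_le]; constructor <;> linarith
  have hZ' : |Z| ≤ s / 2 := by rw [abs_le]; constructor <;> linarith
  have hM' : s / 4 ≤ M := by linarith
  have X2 : X ^ 2 ≤ (s / 4) ^ 2 := by rw [← sq_abs]; gcongr
  have Y2 : Y ^ 2 ≤ (s / 4) ^ 2 := by rw [← sq_abs]; gcongr
  have Z2 : Z ^ 2 ≤ (s / 2) ^ 2 := by rw [← sq_abs]; gcongr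
  have XYZ : |X * Y * Z| ≤ s / 4 * (s / 4) * (s / 2) := by
    rw [abs_mul, abs_mul]; gcongr
  have XYZ' := (abs_le.1 XYZ).1
  have ss : s ^ 2 ≤ 0.2 * s := by nlinarith
  have sss : s ^ 3 ≤ 0.04 * s := by
    have := mul_le_mul_of_nonneg_left ss hs0
    have e : s ^ 3 = s * s ^ 2 := by ring
    rw [e]; linarith
  have hDF : 60 ≤ D * F - Z ^ 2 := by
    have : (7.9 : ℝ) * 7.9 ≤ D * F := by gcongr
    have e : (s / 2) ^ 2 = s ^ 2 / 4 := by ring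
    rw [e] at Z2
    linarith
  have hM0 : 0 ≤ M := by linarith
  have t1 : M * 60 ≤ M * (D * F - Z ^ 2) := by gcongr
  have t2 : F * X ^ 2 ≤ 8 * (s / 4) ^ 2 := by gcongr
  have t3 : D * Y ^ 2 ≤ 8 * (s / 4) ^ 2 := by gcongr
  have hfin : M ≤ 0 := by
    have e1 : (s / 4) ^ 2 = s ^ 2 / 16 := by ring
    have e2 : s / 4 * (s / 4) * (s / 2) = s ^ 3 / 32 := by ring
    have e3 : 2 * X * Y * Z = 2 * (X * Y * Z) := by ring
    rw [e1] at t2 t3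
    rw [e2] at XYZ'
    rw [e3] at h
    clear * - t1 t2 t3 XYZ' h ss sss hM' hs0
    linarith
  refine ⟨?_, ?_, ?_, ?_, ?_, ?_⟩ <;> linarith

lemma dist_sq_inner (x y : E3) : dist x y ^ 2 = inner ℝ (x - y) (x - y) := by
  rw [dist_eq_norm, real_inner_self_eq_norm_sq]

lemma flat_square (p₀ p₁ p₂ p₃ : E3)
    (hdet : LinearMap.det (Amap (p₁ - p₀) (p₂ - p₀) (p₃ - p₀)) = 0)
    (hD1 : 7.9 ≤ dist p₀ p₁ ^ 2) (hD2 : dist p₀ p₁ ^ 2 ≤ 8)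
    (hF1 : 7.9 ≤ dist p₂ p₃ ^ 2) (hF2 : dist p₂ p₃ ^ 2 ≤ 8)
    (ha : 4 ≤ dist p₀ p₂ ^ 2) (ha' : dist p₀ p₂ ^ 2 ≤ 4.05)
    (hb : 4 ≤ dist p₀ p₃ ^ 2) (hb' : dist p₀ p₃ ^ 2 ≤ 4.05)
    (hc : 4 ≤ dist p₁ p₃ ^ 2) (hc' : dist p₁ p₃ ^ 2 ≤ 4.05)
    (he : 4 ≤ dist p₁ p₂ ^ 2) (he' : dist p₁ p₂ ^ 2 ≤ 4.05) :
    dist p₀ p₁ ^ 2 = 8 ∧ dist p₂ p₃ ^ 2 = 8 ∧ dist p₀ p₂ ^ 2 = 4 ∧ dist p₀ p₃ ^ 2 = 4 ∧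
      dist p₁ p₃ ^ 2 = 4 ∧ dist p₁ p₂ ^ 2 = 4 := by
  have hk := LinearMap.bot_lt_ker_of_det_eq_zero hdet
  obtain ⟨t, ht, ht0⟩ := Submodule.exists_mem_ne_zero_of_ne_bot hk.ne'
  rw [LinearMap.mem_ker] at ht
  change t 0 • (p₁ - p₀) + t 1 • (p₂ - p₀) + t 2 • (p₃ - p₀) = 0 at ht
  refine flat_num _ _ _ _ _ _ hD1 hD2 hF1 hF2 ha ha' hb hb' hc hc' he he' _ _ _ _ rfl rfl rfl rfl
    (gram_zero ((1 / 2 : ℝ) • (p₀ + p₁ - p₂ - p₃)) (p₁ - p₀) (p₃ - p₂)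
      (-(t 1 + t 2)) (t 0 + (t 1 + t 2) / 2) ((t 2 - t 1) / 2) ?_ ?_ _ _ _ _ _ _
      ?_ ?_ ?_ ?_ ?_ ?_)
  · rw [← ht]; module
  · rintro ⟨h1, h2, h3⟩
    apply ht0
    ext i
    fin_cases i <;> simp <;> linarith
  all_goals
    simp only [dist_sq_inner, inner_add_left, inner_add_right, inner_sub_left, inner_sub_right,
      real_inner_smul_left, real_inner_smul_right, real_inner_comm p₀ p₁, real_inner_comm p₀ p₂,
      real_inner_comm p₀ p₃, real_inner_comm p₁ p₂, real_inner_comm p₁ p₃, real_inner_comm p₂ p₃]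
    ring

lemma square_flat (p₀ p₁ p₂ p₃ : E3)
    (h1 : dist p₀ p₁ ^ 2 = 8) (h4 : dist p₂ p₃ ^ 2 = 8) (h2 : dist p₀ p₂ ^ 2 = 4)
    (h3 : dist p₀ p₃ ^ 2 = 4) (h5 : dist p₁ p₃ ^ 2 = 4) (h6 : dist p₁ p₂ ^ 2 = 4) :
    LinearMap.det (Amap (p₁ - p₀) (p₂ - p₀) (p₃ - p₀)) = 0 := by
  have hm : p₀ + p₁ - p₂ - p₃ = 0 := by
    rw [← inner_self_eq_zero (𝕜 := ℝ)]
    simp only [dist_sq_inner, inner_add_left, inner_add_right, inner_sub_left, inner_sub_right,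
      real_inner_comm p₀ p₁, real_inner_comm p₀ p₂,
      real_inner_comm p₀ p₃, real_inner_comm p₁ p₂, real_inner_comm p₁ p₃,
      real_inner_comm p₂ p₃] at *
    linarith
  by_contra hne
  have hinj := (LinearMap.equivOfDetNeZero _ hne).injective
  have h0 : Amap (p₁ - p₀) (p₂ - p₀) (p₃ - p₀) !₂[1, -1, -1] = 0 := by
    have : Amap (p₁ - p₀) (p₂ - p₀) (p₃ - p₀) !₂[1, -1, -1] = p₀ + p₁ - p₂ - p₃ := by
      simp [Amap]; abel
    rw [this, hm]
  have h := hinj (a₁ := !₂[1, -1, -1]) (a₂ := 0) (by rw [map_zero]; exact h0)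
  have := congrArg (fun w : E3 => w 0) h
  simp at this

set_option maxHeartbeats 2000000 in
/-- Appendix: in the `0.01`-neighborhood of `S₁ = S(2√2,2,2,2√2,2,2)`, a small simplex
satisfies `Γ(S) ≤ 0`, with equality exactly at `S₁`. -/
theorem compression_nonpos_near_S1 (p₀ p₁ p₂ p₃ : E3)
    (hsmall : IsSmall p₀ p₁ p₂ p₃)
    (h1 : dist p₀ p₁ ∈ Set.Icc (2 * Real.sqrt 2 - 0.01) (2 * Real.sqrt 2))
    (h4 : dist p₂ p₃ ∈ Set.Icc (2 * Real.sqrt 2 - 0.01) (2 * Real.sqrt 2))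
    (h2 : dist p₀ p₂ ∈ Set.Icc (2 : ℝ) 2.01) (h3 : dist p₀ p₃ ∈ Set.Icc (2 : ℝ) 2.01)
    (h5 : dist p₁ p₃ ∈ Set.Icc (2 : ℝ) 2.01) (h6 : dist p₁ p₂ ∈ Set.Icc (2 : ℝ) 2.01) :
    Gamma p₀ p₁ p₂ p₃ ≤ 0 ∧
    (Gamma p₀ p₁ p₂ p₃ = 0 ↔
      (dist p₀ p₁ = 2 * Real.sqrt 2 ∧ dist p₂ p₃ = 2 * Real.sqrt 2 ∧
        dist p₀ p₂ = 2 ∧ dist p₀ p₃ = 2 ∧ dist p₁ p₃ = 2 ∧ dist p₁ p₂ = 2)) := by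
  have hδ := delta_lb
  obtain ⟨h1a, h1b⟩ := h1
  obtain ⟨h4a, h4b⟩ := h4
  obtain ⟨h2a, h2b⟩ := h2
  obtain ⟨h3a, h3b⟩ := h3
  obtain ⟨h5a, h5b⟩ := h5
  obtain ⟨h6a, h6b⟩ := h6
  have s2 : Real.sqrt 2 ^ 2 = 2 := Real.sq_sqrt (by norm_num)
  have s2a : 1.4142 < Real.sqrt 2 := Real.lt_sqrt_of_sq_lt (by norm_num)
  have s2b : Real.sqrt 2 < 1.41425 := by rw [Real.sqrt_lt' (by norm_num)]; norm_num
  have lo : ∀ y : ℝ, 2 * Real.sqrt 2 - 0.01 ≤ y → 2.8184 ≤ y := by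
    intro y hy; norm_num at hy s2a ⊢; linarith
  have y1 := lo _ h1a
  have y4 := lo _ h4a
  have q1 : 7.94 ≤ dist p₀ p₁ ^ 2 := by nlinarith
  have q4 : 7.94 ≤ dist p₂ p₃ ^ 2 := by nlinarith
  have q1' : dist p₀ p₁ ^ 2 ≤ 8 := by nlinarith
  have q4' : dist p₂ p₃ ^ 2 ≤ 8 := by nlinarith
  have sq : ∀ y : ℝ, 2 ≤ y → y ≤ 2.01 → 4 ≤ y ^ 2 ∧ y ^ 2 ≤ 4.0401 := by
    intro y hy hy'; constructor <;> nlinarith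
  obtain ⟨q2, q2'⟩ := sq _ h2a h2b
  obtain ⟨q3, q3'⟩ := sq _ h3a h3b
  obtain ⟨q5, q5'⟩ := sq _ h5a h5b
  obtain ⟨q6, q6'⟩ := sq _ h6a h6b
  obtain ⟨V, hV⟩ : ∃ V, V = (volume (convexHull ℝ ({p₀, p₁, p₂, p₃} : Set E3))).toReal := ⟨_, rfl⟩
  have hV0 : 0 ≤ V := by rw [hV]; exact ENNReal.toReal_nonneg
  have key : Gamma p₀ p₁ p₂ p₃ ≤ (0.716 - δoct) * V := by
    have c0 := corner p₀ p₁ p₂ p₃ (by linarith) (by linarith) (by linarith)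
    have c1 := corner p₁ p₀ p₂ p₃ (by rw [dist_comm]; linarith)
      (by rw [dist_comm p₁ p₀]; linarith) (by rw [dist_comm p₁ p₀]; linarith)
    have c2 := corner p₂ p₃ p₀ p₁ (by linarith)
      (by rw [dist_comm p₂ p₀, dist_comm p₃ p₀]; linarith)
      (by rw [dist_comm p₂ p₁, dist_comm p₃ p₁]; linarith)
    have c3 := corner p₃ p₂ p₀ p₁ (by rw [dist_comm]; linarith)
      (by rw [dist_comm p₂ p₀, dist_comm p₃ p₀, dist_comm p₃ p₂]; linarith)
      (by rw [dist_comm p₂ p₁, dist_comm p₃ p₁, dist_comm p₃ p₂]; linarith)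
    have e1 : ({p₁, p₀, p₂, p₃} : Set E3) = {p₀, p₁, p₂, p₃} := by
      ext x; simp only [Set.mem_insert_iff, Set.mem_singleton_iff]; tauto
    have e2 : ({p₂, p₃, p₀, p₁} : Set E3) = {p₀, p₁, p₂, p₃} := by
      ext x; simp only [Set.mem_insert_iff, Set.mem_singleton_iff]; tauto
    have e3 : ({p₃, p₂, p₀, p₁} : Set E3) = {p₀, p₁, p₂, p₃} := by
      ext x; simp only [Set.mem_insert_iff, Set.mem_singleton_iff]; tauto
    rw [← hV] at c0
    rw [e1, ← hV, dist_comm p₁ p₀] at c1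
    rw [e2, ← hV, dist_comm p₂ p₀, dist_comm p₃ p₀, dist_comm p₂ p₁, dist_comm p₃ p₁] at c2
    rw [e3, ← hV, dist_comm p₂ p₀, dist_comm p₃ p₀, dist_comm p₂ p₁, dist_comm p₃ p₁,
      dist_comm p₃ p₂] at c3
    have n1 := num_bound (dist p₀ p₁) (dist p₀ p₂ ^ 2 - dist p₁ p₂ ^ 2)
      (dist p₀ p₃ ^ 2 - dist p₁ p₃ ^ 2) y1 (by linarith)
      (by rw [abs_le]; constructor <;> linarith) (by rw [abs_le]; constructor <;> linarith)
    have n4 := num_bound (dist p₂ p₃) (dist p₀ p₂ ^ 2 - dist p₀ p₃ ^ 2)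
      (dist p₁ p₂ ^ 2 - dist p₁ p₃ ^ 2) y4 (by linarith)
      (by rw [abs_le]; constructor <;> linarith) (by rw [abs_le]; constructor <;> linarith)
    simp only [← add_sub_assoc, sub_sub_eq_add_sub] at n1 n4
    have m1 := mul_le_mul_of_nonneg_right n1 hV0
    have m4 := mul_le_mul_of_nonneg_right n4 hV0
    rw [add_mul] at m1 m4
    have hU : (volume (convexHull ℝ ({p₀, p₁, p₂, p₃} : Set E3) ∩
      (Metric.closedBall p₀ 1 ∪ Metric.closedBall p₁ 1 ∪ Metric.closedBall p₂ 1 ∪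
        Metric.closedBall p₃ 1))).toReal ≤
        (volume (convexHull ℝ ({p₀, p₁, p₂, p₃} : Set E3) ∩ Metric.closedBall p₀ 1)).toReal +
        (volume (convexHull ℝ ({p₀, p₁, p₂, p₃} : Set E3) ∩ Metric.closedBall p₁ 1)).toReal +
        (volume (convexHull ℝ ({p₀, p₁, p₂, p₃} : Set E3) ∩ Metric.closedBall p₂ 1)).toReal +
        (volume (convexHull ℝ ({p₀, p₁, p₂, p₃} : Set E3) ∩ Metric.closedBall p₃ 1)).toReal := by
      simp only [Set.inter_union_distrib_left]
      refine (measureReal_union_le _ _).trans (add_le_add_left ?_ _)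
      refine (measureReal_union_le _ _).trans (add_le_add_left ?_ _)
      exact measureReal_union_le _ _
    rw [_root_.Gamma, ← hV]
    linarith
  have flat : V = 0 → dist p₀ p₁ ^ 2 = 8 ∧ dist p₂ p₃ ^ 2 = 8 ∧ dist p₀ p₂ ^ 2 = 4 ∧
      dist p₀ p₃ ^ 2 = 4 ∧ dist p₁ p₃ ^ 2 = 4 ∧ dist p₁ p₂ ^ 2 = 4 := by
    intro h
    rw [hV, ENNReal.toReal_eq_zero_iff] at h
    have h' := h.resolve_right (vol_hull_ne_top _ _ _ _)
    rw [vol_hull, mul_eq_zero] at h'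
    have h'' := h'.resolve_right vol_T_pos
    rw [ENNReal.ofReal_eq_zero] at h''
    have hdet := abs_nonpos_iff.1 h''
    apply flat_square p₀ p₁ p₂ p₃ hdet <;> linarith
  refine ⟨key.trans (by nlinarith), ?_, ?_⟩
  · intro h
    rw [h] at key
    have hz : V = 0 := by
      by_contra hne
      have : 0 < V := lt_of_le_of_ne hV0 (Ne.symm hne)
      nlinarith
    obtain ⟨a, b, c, d, e, f⟩ := flat hz
    have big : ∀ y : ℝ, 0 ≤ y → y ^ 2 = 8 → y = 2 * Real.sqrt 2 := by
      intro y hy h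
      refine (sq_eq_sq₀ hy (by positivity)).1 ?_
      rw [h, mul_pow, s2]; norm_num
    have sml : ∀ y : ℝ, 0 ≤ y → y ^ 2 = 4 → y = 2 := by
      intro y hy h
      refine (sq_eq_sq₀ hy (by positivity)).1 ?_
      rw [h]; norm_num
    exact ⟨big _ dist_nonneg a, big _ dist_nonneg b, sml _ dist_nonneg c, sml _ dist_nonneg d,
      sml _ dist_nonneg e, sml _ dist_nonneg f⟩
  · rintro ⟨a, b, c, d, e, f⟩
    have hdet := square_flat p₀ p₁ p₂ p₃ (by rw [a, mul_pow, s2]; norm_num) (by rw [b, mul_pow, s2]; norm_num)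
      (by rw [c]; norm_num) (by rw [d]; norm_num) (by rw [e]; norm_num) (by rw [f]; norm_num)
    have hz : volume (convexHull ℝ ({p₀, p₁, p₂, p₃} : Set E3)) = 0 := by
      rw [vol_hull, hdet, abs_zero, ENNReal.ofReal_zero, zero_mul]
    rw [_root_.Gamma, hz, measure_mono_null Set.inter_subset_left hz, ENNReal.toReal_zero,
      mul_zero, add_zero]
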